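/- arXiv:2406.15589 — 3 statements merged into one kernel-verified Lean document; each statement's English description precedes it below -/
import Mathlib

section
/- Let n ≥ 2, let α, α' ∈ F^{n−1} with α ≠ α', and let γ, δ ∈ T₀ = {u ∈ F : u + u^q = 0}. Then the number of points x ∈ W = F^{n−1} × C with F_α(x) = γ and F_{α'}(x) = δ equals q^{2n−3}. Consequently the q^{2n−1} × q^{2n−2} array whose rows are indexed by x ∈ W, columns by α ∈ F^{n−1}, and whose (x,α)-entry is F_α(x), is an orthogonal array OA(q^{2n−1}, q^{2n−2}, q, 2) of index q^{2n−3} over the q-symbol alphabet T₀. -/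
/-- The affine form `F_α`; a point of `F^n` is a pair `(x₁,…,x_{n-1}, x_n)`. -/
def Falpha {F : Type*} [Field F] (q : ℕ) {m : ℕ} (a b : F) (α : Fin m → F)
    (x : (Fin m → F) × F) : F :=
  x.2 ^ q - x.2 + ∑ i : Fin m,
    (a ^ q * x.1 i ^ (2 * q) - a * x.1 i ^ 2 - (b ^ q - b) * x.1 i ^ (q + 1)
      + (2 * a ^ q * α i ^ q - (b ^ q - b) * α i) * x.1 i ^ q
      - (2 * a * α i + (b ^ q - b) * α i ^ q) * x.1 i)

/-!
Let `σ` be the involution `x ↦ x ^ q` and `Δ x = σ x - x`, so that `K = ker Δ` and, by additive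
Hilbert 90, `T₀ = range Δ`. Then `F_α(y, c) = Δ (c + Q y + ∑ i, L (α i) * y i)` with `Q`
independent of `α` and `L t = 2 a t + (σ b - b) σ t` injective: eliminating `σ t` between `L t` and
`σ (L t)` gives `4 a ^ (q + 1) + (b ^ q - b) ^ 2` times `t`. As `C` is a transversal of `ker Δ`,
each `y` extends to exactly one `(y, c)` with `F_α(y, c) = γ`, and `F_α'(y, c) = δ` then says
`Δ (∑ i, (L (α i) - L (α' i)) * y i) = γ - δ`: this is a fibre of an additive map from `F ^ (n - 1)`
onto `T₀`.
-/

open Finset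

section Counting

theorem card_fiber_mul_card_range {G H : Type*} [AddGroup G] [Fintype G] [AddGroup H]
    [DecidableEq H] (f : G →+ H) {t : H} (ht : t ∈ f.range) :
    #{x | f x = t} * Nat.card f.range = Fintype.card G := by
  have card_fiber_eq_card_ker : #{x | f x = t} = Nat.card f.ker := by
    rw [AddMonoidHom.card_fiber_eq_of_mem_range f ht ⟨0, map_zero f⟩, ← Fintype.card_subtype,
      ← Nat.card_eq_fintype_card]
    rfl
  rw [card_fiber_eq_card_ker, ← AddSubgroup.index_ker, AddSubgroup.card_mul_index,
    Nat.card_eq_fintype_card]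

theorem card_fiber_comp_functional_mul_card_range {F V H : Type*} [DivisionRing F]
    [AddCommGroup V] [Module F V] [Fintype V] [AddGroup H] [DecidableEq H] (f : F →+ H)
    {ℓ : V →ₗ[F] F} (hℓ : ℓ ≠ 0) {t : H} (ht : t ∈ f.range) :
    #{y | f (ℓ y) = t} * Nat.card f.range = Fintype.card V := by
  have range_comp : (f.comp ℓ.toAddMonoidHom).range = f.range :=
    SetLike.coe_injective ((LinearMap.surjective hℓ).range_comp f)
  rw [← range_comp] at ht ⊢
  exact card_fiber_mul_card_range (f.comp ℓ.toAddMonoidHom) ht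

variable {G H Y : Type*} [AddCommGroup G] [AddCommGroup H] (f : G →+ H) {C : Finset G}
  (hC : ∀ x, ∃! c, c ∈ C ∧ f (c - x) = 0)

include hC

theorem existsUnique_mem_transversal_map_add_eq {t : H} (ht : t ∈ f.range) (x : G) :
    ∃! c, c ∈ C ∧ f (c + x) = t := by
  obtain ⟨s, rfl⟩ := ht
  have same_coset (c : G) : f (c + x) = f s ↔ f (c - (s - x)) = 0 := by
    rw [← sub_eq_zero, ← map_sub, sub_sub_eq_add_sub]
  simpa only [same_coset] using hC (s - x)

theorem card_transversal_solutions [Fintype G] [Fintype Y] [DecidableEq G] [DecidableEq H]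
    (g g' : Y → G) {s : H} (hs : s ∈ f.range) (t : H) :
    #{x : Y × G | x.2 ∈ C ∧ f (x.2 + g x.1) = s ∧ f (x.2 + g' x.1) = t}
      = #{y | f (g y - g' y) = s - t} := by
  have second_eq_iff {y : Y} {c : G} (hc : f (c + g y) = s) :
      f (c + g' y) = t ↔ f (g y - g' y) = s - t := by
    rw [← add_sub_add_left_eq_sub (g y) (g' y) c, map_sub, hc, sub_right_inj]
  refine card_nbij Prod.fst ?mapsTo ?injOn ?surjOn
  case mapsTo =>
    rintro ⟨y, c⟩ hx
    obtain ⟨-, hcs, hct⟩ := (mem_filter_univ (y, c)).1 hx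
    exact (mem_filter_univ y).2 ((second_eq_iff hcs).1 hct)
  case injOn =>
    rintro ⟨y, c⟩ hx ⟨_, d⟩ hx' rfl
    obtain ⟨hc, hcs, -⟩ := (mem_filter_univ (y, c)).1 hx
    obtain ⟨hd, hds, -⟩ := (mem_filter_univ (y, d)).1 hx'
    have existsUnique := existsUnique_mem_transversal_map_add_eq f hC hs (g y)
    exact congrArg (Prod.mk y) (existsUnique.unique ⟨hc, hcs⟩ ⟨hd, hds⟩)
  case surjOn =>
    intro y hy
    obtain ⟨c, ⟨hc, hcs⟩, -⟩ := existsUnique_mem_transversal_map_add_eq f hC hs (g y)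
    have hct := (second_eq_iff hcs).2 ((mem_filter_univ y).1 hy)
    exact ⟨(y, c), (mem_filter_univ (y, c)).2 ⟨hc, hcs, hct⟩, rfl⟩

end Counting

section FrobeniusPower

variable {F : Type*} [Field F] [Fintype F] {q k : ℕ}

theorem exists_ringHom_eq_pow (hF : Fintype.card F = q ^ k) (hk : k ≠ 0) :
    ∃ σ : F →+* F, ∀ x, σ x = x ^ q := by
  obtain ⟨p, _, n, hp, hcard⟩ := FiniteField.card' F
  have : Fact p.Prime := ⟨hp⟩
  have q_dvd : q ∣ p ^ (n : ℕ) := hcard ▸ hF ▸ dvd_pow_self q hk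
  obtain ⟨i, -, rfl⟩ := (Nat.dvd_prime_pow hp).1 q_dvd
  exact ⟨iterateFrobenius F p i, iterateFrobenius_def p i⟩

theorem exists_pow_ne_self (hF : Fintype.card F = q ^ k) (hk : 1 < k) : ∃ d : F, d ^ q ≠ d := by
  have one_lt_pow : 1 < q ^ k := hF ▸ Fintype.one_lt_card
  have one_lt_q : 1 < q := (Nat.one_lt_pow_iff (by lia)).1 one_lt_pow
  by_contra! pow_eq_self
  have units_pow (u : Fˣ) : u ^ (q - 1) = 1 := by
    rw [← mul_left_inj u, pow_sub_one_mul (by lia), one_mul]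
    exact Units.ext (pow_eq_self u)
  have dvd : q ^ k - 1 ∣ q - 1 := hF ▸ (FiniteField.forall_pow_eq_one_iff F _).1 units_pow
  have pow_sub_one_le : q ^ k - 1 ≤ q - 1 := Nat.le_of_dvd (by lia) dvd
  have q_lt_pow : q < q ^ k := lt_self_pow₀ one_lt_q hk
  lia

theorem involutive_of_eq_pow (hF : Fintype.card F = q ^ 2) {σ : F → F} (hσq : ∀ x, σ x = x ^ q) :
    Function.Involutive σ := fun x ↦ by
  rw [hσq, hσq, ← pow_mul, ← sq, ← hF, FiniteField.pow_card]

end FrobeniusPower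

/-- The additive map `x ↦ σ x - x`. When `σ` is the involution `x ↦ x ^ q` of the field with `q ^ 2`
elements, its kernel is `K` and its range is the alphabet `T₀`. -/
def conjSub {R : Type*} [Ring R] (σ : R →+* R) : R →+ R :=
  (σ : R →+ R) - AddMonoidHom.id R

section Involution

theorem conjSub_apply {R : Type*} [Ring R] (σ : R →+* R) (x : R) : conjSub σ x = σ x - x := rfl

theorem map_conjSub {R : Type*} [Ring R] {σ : R →+* R} (hσ : Function.Involutive σ) (x : R) :
    σ (conjSub σ x) = -conjSub σ x := by
  rw [conjSub_apply, map_sub, hσ, neg_sub]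

variable {F : Type*} [Field F] {σ : F →+* F}

theorem mem_range_conjSub_iff (hσ : Function.Involutive σ) {d : F} (hd : σ d ≠ d) {t : F} :
    t ∈ (conjSub σ).range ↔ t + σ t = 0 := by
  constructor
  · rintro ⟨x, rfl⟩
    rw [map_conjSub hσ, add_neg_cancel]
  · intro ht
    have hD : conjSub σ d ≠ 0 := sub_ne_zero.2 hd
    have quotient_fixed : σ (t / conjSub σ d) = t / conjSub σ d := by
      rw [map_div₀, map_conjSub hσ, eq_neg_of_add_eq_zero_right ht, neg_div_neg_eq]
    refine ⟨t / conjSub σ d * d, ?_⟩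
    calc conjSub σ (t / conjSub σ d * d) = t / conjSub σ d * conjSub σ d := by
          rw [conjSub_apply, map_mul, quotient_fixed, ← mul_sub, ← conjSub_apply]
      _ = t := div_mul_cancel₀ t hD

theorem card_ker_conjSub_eq_card_range (hσ : Function.Involutive σ) {d : F} (hd : σ d ≠ d) :
    Nat.card (conjSub σ).ker = Nat.card (conjSub σ).range := by
  have hD : conjSub σ d ≠ 0 := sub_ne_zero.2 hd
  have mem_ker_iff (x : F) : x ∈ (conjSub σ).ker ↔ conjSub σ d * x ∈ (conjSub σ).range := by
    rw [mem_range_conjSub_iff hσ hd, map_mul, map_conjSub hσ, neg_mul, ← sub_eq_add_neg, ← mul_sub,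
      mul_eq_zero_iff_left hD, AddMonoidHom.mem_ker, conjSub_apply, sub_eq_zero, sub_eq_zero,
      eq_comm]
  exact Nat.card_congr ((Equiv.mulLeft₀ _ hD).subtypeEquiv mem_ker_iff)

theorem card_range_conjSub_sq (hσ : Function.Involutive σ) {d : F} (hd : σ d ≠ d) :
    Nat.card (conjSub σ).range ^ 2 = Nat.card F := by
  rw [← (conjSub σ).ker.card_mul_index, AddSubgroup.index_ker,
    card_ker_conjSub_eq_card_range hσ hd, sq]

end Involution

/-- The map `L`: the part of `F_α` that depends on `α` is `conjSub σ (∑ i, L (α i) * x i)`. -/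
def columnSlope {R : Type*} [Ring R] (σ : R →+* R) (a b t : R) : R :=
  2 * a * t + conjSub σ b * σ t

/-- The quadratic part `Q`, common to all the `F_α`: `F_0 (y, c) = conjSub σ (c + Q y)`. -/
def quadraticPart {R ι : Type*} [Ring R] [Fintype ι] (σ : R →+* R) (a b : R) (y : ι → R) : R :=
  ∑ i, (a * y i ^ 2 - b * (y i * σ (y i)))

section AffineForm

section CommRing

variable {R : Type*} [CommRing R] {σ : R →+* R} (hσ : Function.Involutive σ)

include hσ

theorem conjSub_quadratic_term (a b y : R) :
    conjSub σ (a * y ^ 2 - b * (y * σ y))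
      = σ a * σ y ^ 2 - a * y ^ 2 - conjSub σ b * (σ y * y) := by
  simp only [conjSub_apply, map_sub, map_mul, map_pow, hσ y]
  ring

theorem conjSub_columnSlope_mul (a b t y : R) :
    conjSub σ (columnSlope σ a b t * y)
      = (2 * σ a * σ t - conjSub σ b * t) * σ y - (2 * a * t + conjSub σ b * σ t) * y := by
  rw [conjSub_apply, columnSlope, map_mul, map_add, map_mul, map_mul, map_mul, map_conjSub hσ,
    hσ, map_ofNat]
  ring

theorem columnSlope_injective [IsDomain R] {a b : R}
    (hab : 4 * (σ a * a) + conjSub σ b ^ 2 ≠ 0) : Function.Injective (columnSlope σ a b) := by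
  intro s t h
  have hconj := congrArg σ h
  simp only [columnSlope, map_add, map_mul, map_ofNat, hσ _, map_conjSub hσ] at h hconj
  have : (4 * (σ a * a) + conjSub σ b ^ 2) * (s - t) = 0 := by
    linear_combination 2 * σ a * h - conjSub σ b * hconj
  exact sub_eq_zero.1 ((mul_eq_zero_iff_left hab).1 this)

end CommRing

variable {F : Type*} [Field F] {σ : F →+* F} (hσ : Function.Involutive σ)

include hσ

theorem Falpha_eq_conjSub {q m : ℕ} (hσq : ∀ x, σ x = x ^ q) (a b : F) (α : Fin m → F)
    (x : (Fin m → F) × F) :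
    Falpha q a b α x
      = conjSub σ (x.2 + (quadraticPart σ a b x.1 + (columnSlope σ a b ∘ α) ⬝ᵥ x.1)) := by
  have pow_two_mul (z : F) : z ^ (2 * q) = σ z ^ 2 := by rw [hσq, mul_comm, pow_mul]
  simp only [Falpha, quadraticPart, dotProduct, Function.comp_apply, ← sum_add_distrib, map_add,
    map_sum, conjSub_quadratic_term hσ, conjSub_columnSlope_mul hσ, pow_two_mul, pow_succ _ q,
    ← hσq, ← conjSub_apply]
  simp only [add_sub_assoc]

theorem card_Falpha_eq_pair_mul_card_range [Fintype F] [DecidableEq F] {q m : ℕ}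
    (hσq : ∀ x, σ x = x ^ q) {a b : F} (hab : 4 * (σ a * a) + conjSub σ b ^ 2 ≠ 0)
    {C : Finset F} (hC : ∀ x, ∃! c, c ∈ C ∧ conjSub σ (c - x) = 0)
    {α α' : Fin m → F} (hα : α ≠ α') {γ δ : F} (hγ : γ ∈ (conjSub σ).range)
    (hδ : δ ∈ (conjSub σ).range) :
    #{x : (Fin m → F) × F | x.2 ∈ C ∧ Falpha q a b α x = γ ∧ Falpha q a b α' x = δ}
      * Nat.card (conjSub σ).range = Fintype.card F ^ m := by
  let w := columnSlope σ a b ∘ α - columnSlope σ a b ∘ α'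
  have hw : w ≠ 0 := sub_ne_zero.2 ((columnSlope_injective hσ hab).comp_left.ne hα)
  have functional_ne_zero : dotProductBilin F F w ≠ 0 := fun h ↦
    hw (dotProduct_eq_zero w (LinearMap.congr_fun h))
  let g (β : Fin m → F) (y : Fin m → F) : F :=
    quadraticPart σ a b y + (columnSlope σ a b ∘ β) ⬝ᵥ y
  have sub_eq (y : Fin m → F) : g α y - g α' y = dotProductBilin F F w y := by
    rw [add_sub_add_left_eq_sub, ← sub_dotProduct, dotProductBilin_apply_apply]
  have card_eq := card_transversal_solutions (conjSub σ) hC (g α) (g α') hγ δ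
  simp only [sub_eq] at card_eq
  simp only [Falpha_eq_conjSub hσ hσq]
  rw [card_eq, card_fiber_comp_functional_mul_card_range (conjSub σ) functional_ne_zero
    (sub_mem hγ hδ), Fintype.card_fun, Fintype.card_fin]

end AffineForm

theorem orthogonal_array_strength_two_general {F : Type*} [Field F] [Fintype F] [DecidableEq F]
    {q m : ℕ} (hF : Fintype.card F = q ^ 2) {a b : F}
    (hab : 4 * a ^ (q + 1) + (b ^ q - b) ^ 2 ≠ 0)
    {C : Finset F} (hC : ∀ x : F, ∃! c : F, c ∈ C ∧ (c - x) ^ q = c - x)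
    {α α' : Fin m → F} (hα : α ≠ α') {γ δ : F} (hγ : γ + γ ^ q = 0) (hδ : δ + δ ^ q = 0) :
    #{x : (Fin m → F) × F | x.2 ∈ C ∧ Falpha q a b α x = γ ∧ Falpha q a b α' x = δ}
      = q ^ (2 * m - 1) := by
  obtain ⟨σ, hσq⟩ := exists_ringHom_eq_pow hF two_ne_zero
  obtain ⟨d, hd⟩ := exists_pow_ne_self hF one_lt_two
  have hσ := involutive_of_eq_pow hF hσq
  rw [← hσq] at hd
  have card_range : Nat.card (conjSub σ).range = q := Nat.pow_left_injective two_ne_zero <|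
    (card_range_conjSub_sq hσ hd).trans (Nat.card_eq_fintype_card.trans hF)
  have q_pos : 0 < q := card_range ▸ Nat.card_pos
  have m_ne_zero : m ≠ 0 := by
    rintro rfl
    exact hα (Subsingleton.elim α α')
  simp only [pow_succ a q, ← hσq, ← conjSub_apply] at hab
  simp only [← hσq, ← sub_eq_zero (b := _ - _), ← conjSub_apply] at hC
  rw [← hσq, ← mem_range_conjSub_iff hσ hd] at hγ hδ
  have count := card_Falpha_eq_pair_mul_card_range hσ hσq hab hC hα hγ hδ
  rw [card_range, hF, ← pow_mul, ← pow_sub_one_mul (by lia : 2 * m ≠ 0)] at count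
  exact Nat.eq_of_mul_eq_mul_right q_pos count

/-- For two distinct columns `α ≠ α'` and any two symbols `γ, δ ∈ T₀`, exactly
`q^(2n-3)` points of `W = F^{n-1} × C` satisfy `F_α(x) = γ` and `F_{α'}(x) = δ`:
the array `(F_α(x))_{x ∈ W, α ∈ F^{n-1}}` is an `OA(q^{2n-1}, q^{2n-2}, q, 2)`
of index `q^{2n-3}` over the alphabet `T₀`. -/
theorem orthogonal_array_strength_two (q : ℕ) (hq : IsPrimePow q)
    (F : Type*) [Field F] [Fintype F] [DecidableEq F] (hF : Fintype.card F = q ^ 2)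
    (a b : F) (ha : a ≠ 0) (hb : b ^ q ≠ b)
    (hab : 4 * a ^ (q + 1) + (b ^ q - b) ^ 2 ≠ 0)
    (C : Finset F) (hC : ∀ x : F, ∃! c : F, c ∈ C ∧ (c - x) ^ q = c - x)
    (n : ℕ) (hn : 2 ≤ n) (α α' : Fin (n - 1) → F) (hαα' : α ≠ α')
    (γ δ : F) (hγ : γ + γ ^ q = 0) (hδ : δ + δ ^ q = 0) :
    (Finset.univ.filter (fun x : (Fin (n - 1) → F) × F =>
        x.2 ∈ C ∧ Falpha q a b α x = γ ∧ Falpha q a b α' x = δ)).card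
      = q ^ (2 * n - 3) := by
  rw [show 2 * n - 3 = 2 * (n - 1) - 1 by lia]
  exact orthogonal_array_strength_two_general hF hab hC hαα' hγ hδ
end

section
/- Let ε ∈ F \ K and let t₁, t₂, t₃, t₄, t₅ be five pairwise distinct elements of K. Then the 5×5 matrix over F whose j-th row is (1, t_j + εt_j², t_j³ + εt_j⁴, (t_j + εt_j²)^q, (t_j³ + εt_j⁴)^q) has nonzero determinant. In particular the set Ω = {(t + εt², t³ + εt⁴) : t ∈ K} of q pairs satisfies condition (luc1): any five of its elements give a nonsingular matrix of this form. -/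
/-!
A ring endomorphism `σ` fixing every `t j` acts on the entries by replacing `ε` with `σ ε`. The
matrix is therefore the Vandermonde matrix of `t` times a matrix of coefficients. Exchanging
columns 2 and 3 (counted from 0) of the latter gives the block diagonal matrix `1 ⊕ B ⊕ B` with
`B = !![1, 1; ε, σ ε]`, so its determinant is `-(σ ε - ε) ^ 2`. The `q`-th power map is such a `σ`.
-/

section CoefficientMatrix

variable {R : Type*} [CommRing R]

/-- The coefficients of the polynomials `1`, `X + εX²`, `X³ + εX⁴`, `X + δX²`, `X³ + δX⁴`: the
column is the polynomial, the row is the exponent. Right multiplication by it turns a Vandermonde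
matrix into the matrix of condition (luc1), where `δ = ε ^ q`. -/
def omegaCoeff (ε δ : R) : Matrix (Fin 5) (Fin 5) R :=
  !![1, 0, 0, 0, 0;
     0, 1, 0, 1, 0;
     0, ε, 0, δ, 0;
     0, 0, 1, 0, 1;
     0, 0, ε, 0, δ]

theorem omegaCoeff_submatrix_swap (ε δ : R) :
    (omegaCoeff ε δ).submatrix id (Equiv.swap 2 3) =
      Matrix.reindex finSumFinEquiv finSumFinEquiv
        (Matrix.fromBlocks !![1, 0, 0; 0, 1, 1; 0, ε, δ] 0 0 !![1, 1; ε, δ]) := by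
  ext i j
  fin_cases i <;> fin_cases j <;> rfl

theorem det_omegaCoeff (ε δ : R) : (omegaCoeff ε δ).det = -(δ - ε) ^ 2 := by
  have hswap : ((omegaCoeff ε δ).submatrix id (Equiv.swap 2 3)).det = -(omegaCoeff ε δ).det := by
    simp [Matrix.det_permute']
  rw [← neg_eq_iff_eq_neg, ← hswap, omegaCoeff_submatrix_swap, Matrix.det_reindex_self,
    Matrix.det_fromBlocks_zero₂₁, Matrix.det_fin_three, Matrix.det_fin_two_of]
  simp [pow_two]

theorem vandermonde_mul_omegaCoeff (ε δ : R) (t : Fin 5 → R) :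
    Matrix.vandermonde t * omegaCoeff ε δ = Matrix.of fun j ↦
      ![1, t j + ε * t j ^ 2, t j ^ 3 + ε * t j ^ 4, t j + δ * t j ^ 2, t j ^ 3 + δ * t j ^ 4] := by
  ext i j
  fin_cases j <;>
    simp [omegaCoeff, Matrix.mul_apply, Fin.sum_univ_five, Matrix.vandermonde_apply, mul_comm]

end CoefficientMatrix

theorem exists_ringHom_eq_pow_of_card_eq_pow {R : Type*} [CommRing R] [IsDomain R] [Fintype R]
    {q n : ℕ} (hq : IsPrimePow q) (hcard : Fintype.card R = q ^ n) :
    ∃ σ : R →+* R, ∀ x, σ x = x ^ q := by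
  obtain ⟨p, k, hp, -, rfl⟩ := hq
  have : Fact p.Prime := ⟨hp.nat_prime⟩
  have : CharP R p := charP_of_card_eq_prime_pow (hcard.trans (pow_mul p k n).symm)
  exact ⟨iterateFrobenius R p k, iterateFrobenius_def p k⟩

theorem omega_condition_luc1_general {R : Type*} [CommRing R] [IsDomain R] (σ : R →+* R)
    {ε : R} (hε : σ ε ≠ ε) {t : Fin 5 → R} (ht : ∀ j, σ (t j) = t j)
    (htinj : Function.Injective t) :
    (Matrix.of (fun j : Fin 5 =>
      ![1, t j + ε * t j ^ 2, t j ^ 3 + ε * t j ^ 4,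
        σ (t j + ε * t j ^ 2), σ (t j ^ 3 + ε * t j ^ 4)])).det ≠ 0 := by
  simp only [map_add, map_mul, map_pow, ht]
  rw [← vandermonde_mul_omegaCoeff, Matrix.det_mul, det_omegaCoeff]
  exact mul_ne_zero (Matrix.det_vandermonde_ne_zero_iff.2 htinj)
    (neg_ne_zero.2 (pow_ne_zero 2 (sub_ne_zero.2 hε)))

/-- Any five distinct points of the twisted-quartic-type set
`Ω = {(t + εt², t³ + εt⁴) : t ∈ K}` give a nonsingular 5×5 matrix of the form
required by condition (luc1). -/
theorem omega_condition_luc1 (q : ℕ) (hq : IsPrimePow q)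
    (F : Type*) [Field F] [Fintype F] (hF : Fintype.card F = q ^ 2)
    (ε : F) (hε : ε ^ q ≠ ε)
    (t : Fin 5 → F) (ht : ∀ j, (t j) ^ q = t j) (htinj : Function.Injective t) :
    (Matrix.of (fun j : Fin 5 =>
      ![(1 : F), t j + ε * t j ^ 2, t j ^ 3 + ε * t j ^ 4,
        (t j + ε * t j ^ 2) ^ q, (t j ^ 3 + ε * t j ^ 4) ^ q])).det ≠ 0 := by
  obtain ⟨σ, hσ⟩ := exists_ringHom_eq_pow_of_card_eq_pow hq hF
  simpa only [hσ] using omega_condition_luc1_general σ (by rwa [hσ]) (by simpa only [hσ]) htinj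
end

section
/- Assume 4a^{q+1} + (b^q − b)² ≠ 0. If c ∈ F is such that ((b − b^q)α^q − 2aα)·c ∈ K for every α ∈ F, then c = 0. (Equivalently, the K-linear map α ↦ (b − b^q)α^q − 2aα on F is bijective, so its image times a nonzero c cannot be contained in K.) -/
/-!
Write `σ` for the involution `x ↦ x ^ q` and `L α = u * σ α - v * α`, where `u = b - b ^ q` and
`v = 2 * a`. As a 2 × 2 matrix acting on `(α, σ α)`, the map `L` has, up to sign, the adjugate
`β ↦ u * σ β + σ v * β`, so the image of `L` contains every multiple of `δ = u * σ u - v * σ v`.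
If `L α * c` is always fixed by `σ`, then so is every multiple of `δ * c`, which forces `δ * c = 0`
because `σ` is not the identity.
-/

theorem eq_zero_of_forall_map_mul_eq {M S : Type*} [MonoidWithZero M] [IsRightCancelMulZero M]
    [FunLike S M M] [MulHomClass S M M] {σ : S} {t d : M} (ht : σ t ≠ t)
    (hd : ∀ x, σ (x * d) = x * d) : d = 0 := by
  by_contra hd₀
  have hσd : σ d = d := by simpa only [one_mul] using hd 1
  have htd : σ t * d = t * d := by
    calc σ t * d = σ (t * d) := by rw [map_mul, hσd]
      _ = t * d := hd t
  exact ht (mul_right_cancel₀ hd₀ htd)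

theorem mul_map_adjugate_sub_mul_adjugate {R : Type*} [CommRing R] {σ : R →+* R}
    (hσ : Function.Involutive σ) (u v β : R) :
    u * σ (u * σ β + σ v * β) - v * (u * σ β + σ v * β) = (u * σ u - v * σ v) * β := by
  rw [map_add, map_mul, map_mul, hσ β, hσ v]
  ring

theorem separating_coefficients_general {R : Type*} [CommRing R] [NoZeroDivisors R]
    {σ : R →+* R} (hσ : Function.Involutive σ) {t : R} (ht : σ t ≠ t)
    {u v : R} (huv : u * σ u ≠ v * σ v) {c : R}
    (hc : ∀ α, σ ((u * σ α - v * α) * c) = (u * σ α - v * α) * c) : c = 0 := by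
  have hfix (β : R) : σ (β * ((u * σ u - v * σ v) * c)) = β * ((u * σ u - v * σ v) * c) := by
    simpa only [mul_map_adjugate_sub_mul_adjugate hσ, mul_left_comm β, mul_assoc]
      using hc (u * σ β + σ v * β)
  have hδc : (u * σ u - v * σ v) * c = 0 := eq_zero_of_forall_map_mul_eq ht hfix
  exact (mul_eq_zero.mp hδc).resolve_left (sub_ne_zero.mpr huv)

theorem sub_map_mul_map_sub_two_mul_mul_map {R : Type*} [CommRing R] {σ : R →+* R}
    (hσ : Function.Involutive σ) (a b : R) :
    (b - σ b) * σ (b - σ b) - 2 * a * σ (2 * a) = -(4 * (σ a * a) + (σ b - b) ^ 2) := by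
  rw [map_sub, map_mul, map_ofNat, hσ b]
  ring

section FiniteField

variable {F : Type*} [Field F] [Fintype F] {q : ℕ}

theorem exists_ringHom_eq_pow_of_dvd_card (hq : q ∣ Fintype.card F) :
    ∃ σ : F →+* F, ∀ x, σ x = x ^ q := by
  obtain ⟨p, _⟩ := CharP.exists F
  obtain ⟨n, hp, hcard⟩ := FiniteField.card F p
  have : ExpChar F p := .prime hp
  obtain ⟨k, -, rfl⟩ := (Nat.dvd_prime_pow hp).mp (hcard ▸ hq)
  exact ⟨iterateFrobenius F p k, iterateFrobenius_def p k⟩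

theorem exists_involutive_ringHom_eq_pow (hF : Fintype.card F = q ^ 2) :
    ∃ σ : F →+* F, Function.Involutive σ ∧ ∀ x, σ x = x ^ q := by
  obtain ⟨σ, hσ⟩ := exists_ringHom_eq_pow_of_dvd_card (hF ▸ dvd_pow_self q two_ne_zero)
  refine ⟨σ, fun x ↦ ?_, hσ⟩
  rw [hσ, hσ, ← pow_mul, ← sq, ← hF, FiniteField.pow_card]

end FiniteField

/-- If `((b - b^q)α^q - 2aα)·c` lies in the subfield `K` for every `α ∈ F`,
then `c = 0`. -/
theorem separating_coefficients (q : ℕ) (hq : IsPrimePow q)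
    (F : Type*) [Field F] [Fintype F] (hF : Fintype.card F = q ^ 2)
    (a b : F) (ha : a ≠ 0) (hb : b ^ q ≠ b)
    (hab : 4 * a ^ (q + 1) + (b ^ q - b) ^ 2 ≠ 0)
    (c : F)
    (hc : ∀ α : F, (((b - b ^ q) * α ^ q - 2 * a * α) * c) ^ q
        = ((b - b ^ q) * α ^ q - 2 * a * α) * c) :
    c = 0 := by
  obtain ⟨σ, hσ, hpow⟩ := exists_involutive_ringHom_eq_pow hF
  simp only [pow_succ a, ← hpow] at hb hab hc
  have hδ := neg_ne_zero.mpr hab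
  rw [← sub_map_mul_map_sub_two_mul_mul_map hσ, sub_ne_zero] at hδ
  exact separating_coefficients_general hσ hb hδ hc
end
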